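/- arXiv:1212.3529 — 2 statements merged into one kernel-verified Lean document; each statement's English description precedes it below -/
import Mathlib

section
/- Let R be a ring with a left Artinian left quotient ring Q = C⁻¹R. If I is a (two-sided) ideal of R, then C⁻¹I is a (two-sided) ideal of Q and (C⁻¹I)^i = C⁻¹(I^i) for all i ≥ 1. -/
open Function

universe u v

/-- A regular element of a ring: a two-sided non-zero-divisor. -/
def IsRegElem {R : Type*} [Ring R] (c : R) : Prop :=
  (∀ x : R, c * x = 0 → x = 0) ∧ (∀ x : R, x * c = 0 → x = 0)

/-- The set `C` of regular elements of a ring. -/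
def regSet (R : Type*) [Ring R] : Set R := {c : R | IsRegElem c}

/-- A (left) ideal is two-sided. -/
def Ideal.IsTwoSidedNC {R : Type*} [Ring R] (I : Ideal R) : Prop :=
  ∀ a ∈ I, ∀ r : R, a * r ∈ I

/-- A prime (two-sided) ideal of a possibly noncommutative ring. -/
def Ideal.IsPrimeNC {R : Type*} [Ring R] (P : Ideal R) : Prop :=
  P ≠ ⊤ ∧ P.IsTwoSidedNC ∧ ∀ a b : R, (∀ r : R, a * r * b ∈ P) → a ∈ P ∨ b ∈ P

/-- The prime radical `n` of a ring: the intersection of all prime ideals. -/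
def primeRadical (R : Type*) [Ring R] : Ideal R := sInf {P : Ideal R | P.IsPrimeNC}

/-- `n` is a nilpotent ideal. -/
def IsNilpotentIdeal {R : Type*} [Ring R] (I : Ideal R) : Prop := ∃ k : ℕ, I ^ (k + 1) = ⊥

/-- `φ : R →+* Q` realizes `Q` as a left quotient ring `C⁻¹R` of `R`:  `R` embeds in `Q`,
every regular element of `R` becomes invertible in `Q`, and every element of `Q` has the
form `(φ c)⁻¹ * (φ r)` with `c` regular. -/
structure IsLeftQuotRing {R : Type u} {Q : Type v} [Ring R] [Ring Q] (φ : R →+* Q) : Prop where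
  inj : Function.Injective φ
  isUnit : ∀ c : R, IsRegElem c → IsUnit (φ c)
  denom : ∀ q : Q, ∃ c r : R, IsRegElem c ∧ φ c * q = φ r

/-- Data of a left quotient ring of `R`. -/
structure LeftQuotData (R : Type u) [Ring R] : Type (u + 1) where
  Q : Type u
  [instQ : Ring Q]
  φ : R →+* Q
  quot : IsLeftQuotRing φ

attribute [instance] LeftQuotData.instQ

/-- `R` has a left Artinian left quotient ring `Q = C⁻¹R`. -/
def HasArtinianLeftQuot (R : Type u) [Ring R] : Prop :=
  ∃ d : LeftQuotData R, IsArtinianRing d.Q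

/-- A subset of a ring is a left annihilator. -/
def IsLeftAnnihilatorSet {R : Type*} [Ring R] (A : Set R) : Prop :=
  ∃ S : Set R, A = {r : R | ∀ s ∈ S, r * s = 0}

/-- The ascending chain condition on left annihilators. -/
def ACCLeftAnnihilators (R : Type*) [Ring R] : Prop :=
  ∀ f : ℕ → Set R, (∀ i, IsLeftAnnihilatorSet (f i)) → (∀ i j, i ≤ j → f i ⊆ f j) →
    ∃ N, ∀ k, N ≤ k → f k = f N

/-- The module `M` contains no infinite direct sum of nonzero submodules. -/
def NoInfiniteIndepFamily (R : Type*) (M : Type*) [Ring R] [AddCommGroup M] [Module R M] : Prop :=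
  ¬ ∃ f : ℕ → Submodule R M, (∀ i, f i ≠ ⊥) ∧ iSupIndep f

/-- A left Goldie ring: ACC on left annihilators and no infinite direct sums of nonzero
left ideals. -/
def IsLeftGoldie (R : Type*) [Ring R] : Prop :=
  ACCLeftAnnihilators R ∧ NoInfiniteIndepFamily R R

/-- The subquotient `n^i/n^{i+1}` of `R` determined by the prime radical `n`. -/
abbrev grPiece (R : Type*) [Ring R] (i : ℕ) :=
  ↥(primeRadical R ^ i) ⧸
    (Submodule.comap (primeRadical R ^ i : Ideal R).subtype (primeRadical R ^ (i + 1)))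

/-- The class of `x ∈ n^i` in `n^i/n^{i+1}`. -/
def grMk {R : Type*} [Ring R] (i : ℕ) (x : R) (hx : x ∈ primeRadical R ^ i) : grPiece R i :=
  Submodule.Quotient.mk ⟨x, hx⟩

/-- The `C̄`-torsion submodule `τ_i` of `n^i/n^{i+1}` (take the span, which coincides with the
set of torsion elements whenever the latter is a submodule, e.g. when `C̄` is a left Ore set);
here `C̄` is represented through `π : R → R̄` as `{c : R | IsRegElem (π c)}`. -/
def tauSub {R : Type u} {Rbar : Type v} [Ring R] [Ring Rbar] (π : R →+* Rbar) (i : ℕ) :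
    Submodule R (grPiece R i) :=
  Submodule.span R {u : grPiece R i | ∃ c : R, IsRegElem (π c) ∧ c • u = 0}

/-- The `C̄`-torsionfree module `f_i = (n^i/n^{i+1})/τ_i`. -/
abbrev fMod {R : Type u} {Rbar : Type v} [Ring R] [Ring Rbar] (π : R →+* Rbar) (i : ℕ) :=
  grPiece R i ⧸ tauSub π i

/-- The class of `x ∈ n^i` in `f_i`. -/
def fMk {R : Type u} {Rbar : Type v} [Ring R] [Ring Rbar] (π : R →+* Rbar) (i : ℕ) (x : R)
    (hx : x ∈ primeRadical R ^ i) : fMod π i :=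
  Submodule.Quotient.mk (grMk i x hx)

/-- The subset `C⁻¹K = {(φ c)⁻¹ (φ a) : c ∈ C, a ∈ K}` of a left quotient ring. -/
def locSet {R : Type u} {Q : Type v} [Ring R] [Ring Q] (φ : R →+* Q) (K : Ideal R) : Set Q :=
  {q : Q | ∃ c a : R, IsRegElem c ∧ a ∈ K ∧ φ c * q = φ a}

/-- A subset of a ring is a left Ore set (multiplicatively closed and satisfying the left
Ore condition). -/
def IsLeftOreSubset {A : Type*} [Ring A] (S : Set A) : Prop :=
  (1 : A) ∈ S ∧ (∀ s ∈ S, ∀ t ∈ S, s * t ∈ S) ∧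
    ∀ s ∈ S, ∀ a : A, ∃ t ∈ S, ∃ b : A, t * a = b * s

/-- A left denominator set. -/
def IsLeftDenominatorSet {A : Type*} [Ring A] (S : Set A) : Prop :=
  IsLeftOreSubset S ∧ ∀ a : A, ∀ s ∈ S, a * s = 0 → ∃ t ∈ S, t * a = 0

/-!
The point is that `C⁻¹I` is two-sided. The left ideal `J = C⁻¹I` satisfies `J * c ⊆ J` for every
`c ∈ C`, so right multiplication by `c` induces a surjective endomorphism of the cyclic left
`Q`-module `Q ⧸ J`. When surjective endomorphisms of finitely generated `Q`-modules are injective,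
as over every left Noetherian (in particular every left Artinian) ring, this says that `x * c ∈ J`
implies `x ∈ J`, that is, `J * c⁻¹ ⊆ J`. Once `C⁻¹I` is two-sided, a product
`(c⁻¹ * a) * (d⁻¹ * b)` can be rewritten by absorbing `d⁻¹` into the left factor, so extension of
ideals commutes with products.
-/

theorem isTwoSidedNC_iff_isTwoSided {R : Type*} [Ring R] {I : Ideal R} :
    I.IsTwoSidedNC ↔ I.IsTwoSided :=
  ⟨fun h => ⟨fun r ha => h _ ha r⟩, fun _ _ ha r => I.mul_mem_right r ha⟩

section IdealMap

variable {R S : Type*} [Semiring R] [Semiring S] (f : R →+* S) (I K : Ideal R)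

theorem mul_map_mem_ideal_map [I.IsTwoSided] {x : S} (hx : x ∈ I.map f) (r : R) :
    x * f r ∈ I.map f := by
  let mulRight : S →ₗ[S] S := LinearMap.toSpanSingleton S S (f r)
  suffices I.map f ≤ Submodule.comap mulRight (I.map f) from this hx
  refine Ideal.span_le.mpr ?_
  rintro _ ⟨a, ha, rfl⟩
  change f a * f r ∈ I.map f
  rw [← map_mul]
  exact Ideal.mem_map_of_mem f (I.mul_mem_right r ha)

theorem ideal_map_mul [hI : (I.map f).IsTwoSided] : (I * K).map f = I.map f * K.map f := by
  apply le_antisymm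
  · refine Ideal.map_le_of_le_comap (Ideal.mul_le.mpr fun a ha b hb => ?_)
    rw [Ideal.mem_comap, map_mul]
    exact Ideal.mul_mem_mul (Ideal.mem_map_of_mem f ha) (Ideal.mem_map_of_mem f hb)
  · have : (Ideal.span (f '' I)).IsTwoSided := hI
    rw [Ideal.map, Ideal.map, Ideal.span_mul_span', Ideal.span_le]
    rintro _ ⟨_, ⟨a, ha, rfl⟩, _, ⟨b, hb, rfl⟩, rfl⟩
    change f a * f b ∈ (I * K).map f
    rw [← map_mul]
    exact Ideal.mem_map_of_mem f (Ideal.mul_mem_mul ha hb)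

theorem ideal_map_pow [(I.map f).IsTwoSided] (n : ℕ) : (I ^ n).map f = I.map f ^ n := by
  induction n with
  | zero => simp only [Submodule.pow_zero, Ideal.one_eq_top, Ideal.map_top]
  | succ n ih =>
    obtain rfl | hn := eq_or_ne n 0
    · simp only [zero_add, Submodule.pow_one]
    · rw [Submodule.pow_succ' _ hn, Submodule.pow_succ' _ hn, ideal_map_mul, ih]

end IdealMap

theorem mem_of_mul_isUnit_mem {Q : Type*} [Ring Q] [OrzechProperty Q] {J : Ideal Q} {u : Q}
    (hu : IsUnit u) (hJu : ∀ y ∈ J, y * u ∈ J) {x : Q} (hx : x * u ∈ J) : x ∈ J := by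
  let mulRight : Q ⧸ J →ₗ[Q] Q ⧸ J := Submodule.mapQ J J (LinearMap.toSpanSingleton Q Q u) hJu
  have mulRight_surjective : Surjective mulRight := by
    intro y
    obtain ⟨y, rfl⟩ := Submodule.Quotient.mk_surjective J y
    obtain ⟨z, rfl⟩ : ∃ z, z * u = y :=
      (IsUnit.isUnit_iff_mulRight_bijective.mp hu).surjective y
    exact ⟨Submodule.Quotient.mk z, rfl⟩
  have mulRight_mk_eq_zero : mulRight (Submodule.Quotient.mk x) = 0 :=
    (Submodule.Quotient.mk_eq_zero J).mpr hx
  rw [← Submodule.Quotient.mk_eq_zero J]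
  exact (map_eq_zero_iff _ (OrzechProperty.injective_of_surjective_endomorphism _
    mulRight_surjective)).mp mulRight_mk_eq_zero

namespace IsRegElem

variable {R : Type*} [Ring R]

theorem one : IsRegElem (1 : R) :=
  ⟨fun x hx => by rwa [one_mul] at hx, fun x hx => by rwa [mul_one] at hx⟩

theorem mul {c d : R} (hc : IsRegElem c) (hd : IsRegElem d) : IsRegElem (c * d) :=
  ⟨fun x hx => hd.1 x (hc.1 _ (by rwa [← mul_assoc])),
    fun x hx => hc.2 x (hd.2 _ (by rwa [mul_assoc]))⟩

end IsRegElem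

theorem map_mem_locSet {R : Type u} {Q : Type v} [Ring R] [Ring Q] (φ : R →+* Q) {K : Ideal R}
    {a : R} (ha : a ∈ K) : φ a ∈ locSet φ K :=
  ⟨1, a, IsRegElem.one, ha, by rw [map_one, one_mul]⟩

namespace IsLeftQuotRing

variable {R : Type u} {Q : Type v} [Ring R] [Ring Q] {φ : R →+* Q}

/-- For `q = φ r'` this is the left Ore condition for the regular elements of `R`. -/
theorem exists_map_mul_eq_map_mul_map (h : IsLeftQuotRing φ) (q : Q) {d : R}
    (hd : IsRegElem d) : ∃ e r : R, IsRegElem e ∧ φ e * q = φ r * φ d := by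
  obtain ⟨p, rfl⟩ : ∃ p, p * φ d = q :=
    (IsUnit.isUnit_iff_mulRight_bijective.mp (h.isUnit d hd)).surjective q
  obtain ⟨e, r, he, her⟩ := h.denom p
  exact ⟨e, r, he, by rw [← mul_assoc, her]⟩

theorem add_mem_locSet (h : IsLeftQuotRing φ) {K : Ideal R} {x y : Q} (hx : x ∈ locSet φ K)
    (hy : y ∈ locSet φ K) : x + y ∈ locSet φ K := by
  obtain ⟨c, a, hc, ha, hca⟩ := hx
  obtain ⟨d, b, hd, hb, hdb⟩ := hy
  obtain ⟨e, r, he, her⟩ := h.exists_map_mul_eq_map_mul_map (φ c) hd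
  refine ⟨e * c, e * a + r * b, he.mul hc,
    K.add_mem (K.mul_mem_left e ha) (K.mul_mem_left r hb), ?_⟩
  calc φ (e * c) * (x + y)
      = φ e * (φ c * x) + φ e * φ c * y := by rw [map_mul, mul_add, mul_assoc (φ e) (φ c) x]
    _ = φ e * φ a + φ r * (φ d * y) := by rw [hca, her, mul_assoc]
    _ = φ (e * a + r * b) := by rw [hdb, map_add, map_mul, map_mul]

theorem mul_mem_locSet (h : IsLeftQuotRing φ) {K : Ideal R} (q : Q) {x : Q}
    (hx : x ∈ locSet φ K) : q * x ∈ locSet φ K := by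
  obtain ⟨c, a, hc, ha, hca⟩ := hx
  obtain ⟨e, r, he, her⟩ := h.exists_map_mul_eq_map_mul_map q hc
  exact ⟨e, r * a, he, K.mul_mem_left r ha, by rw [← mul_assoc, her, mul_assoc, hca, map_mul]⟩

theorem coe_map (h : IsLeftQuotRing φ) (K : Ideal R) : (K.map φ : Set Q) = locSet φ K := by
  apply Set.Subset.antisymm
  · intro q hq
    induction hq using Submodule.span_induction with
    | mem _ hx =>
      obtain ⟨a, ha, rfl⟩ := hx
      exact map_mem_locSet φ ha
    | zero => simpa only [map_zero] using map_mem_locSet φ K.zero_mem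
    | add _ _ _ _ hx hy => exact h.add_mem_locSet hx hy
    | smul q _ _ hx => exact h.mul_mem_locSet q hx
  · rintro q ⟨c, a, hc, ha, hca⟩
    rw [SetLike.mem_coe, ← Ideal.unit_mul_mem_iff_mem _ (h.isUnit c hc), hca]
    exact Ideal.mem_map_of_mem φ ha

theorem isTwoSided_map [OrzechProperty Q] (h : IsLeftQuotRing φ) (I : Ideal R)
    [I.IsTwoSided] : (I.map φ).IsTwoSided where
  mul_mem_of_left {x} q hx := by
    obtain ⟨c, r, hc, hcr⟩ := h.denom q
    obtain ⟨y, rfl⟩ : ∃ y, y * φ c = x :=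
      (IsUnit.isUnit_iff_mulRight_bijective.mp (h.isUnit c hc)).surjective x
    have hy : y ∈ I.map φ :=
      mem_of_mul_isUnit_mem (h.isUnit c hc) (fun _ hz => mul_map_mem_ideal_map φ I hz c) hx
    rw [mul_assoc, hcr]
    exact mul_map_mem_ideal_map φ I hy r

end IsLeftQuotRing

theorem localization_of_ideal_powers_general
    {R : Type u} [Ring R] {Q : Type v} [Ring Q] [OrzechProperty Q] (φ : R →+* Q)
    (hquot : IsLeftQuotRing φ) (I : Ideal R) (hI : I.IsTwoSidedNC) :
    ∃ J : Ideal Q, J.IsTwoSidedNC ∧ (↑J : Set Q) = locSet φ I ∧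
      ∀ i : ℕ, (↑(J ^ i) : Set Q) = locSet φ (I ^ i) := by
  have : I.IsTwoSided := isTwoSidedNC_iff_isTwoSided.mp hI
  have hJ : (I.map φ).IsTwoSided := hquot.isTwoSided_map I
  refine ⟨I.map φ, isTwoSidedNC_iff_isTwoSided.mpr hJ, hquot.coe_map I, fun i => ?_⟩
  rw [← ideal_map_pow, hquot.coe_map]

/-- **Proposition (`b13Sep12`.(1)).** Let `R` be a ring with a left Artinian left quotient
ring `Q = C⁻¹R` (realized by `φ : R → Q`).  If `I` is a (two-sided) ideal of `R` then
`C⁻¹I` is a (two-sided) ideal of `Q` and `(C⁻¹I)^i = C⁻¹(I^i)` for all `i ≥ 1`. -/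
theorem localization_of_ideal_powers
    {R : Type u} [Ring R] {Q : Type v} [Ring Q] (φ : R →+* Q)
    (hquot : IsLeftQuotRing φ) (hart : IsArtinianRing Q)
    (I : Ideal R) (hI2 : I.IsTwoSidedNC) :
    ∃ J : Ideal Q, J.IsTwoSidedNC ∧ (↑J : Set Q) = locSet φ I ∧
      ∀ i : ℕ, 1 ≤ i → (↑(J ^ i) : Set Q) = locSet φ (I ^ i) := by
  obtain ⟨J, hJ, hJI, hpow⟩ := localization_of_ideal_powers_general φ hquot I hI2
  exact ⟨J, hJ, hJI, fun i _ => hpow i⟩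
end

section
/- Let R be a ring with a left Artinian left quotient ring Q = C⁻¹R, and let r be the (Jacobson = prime) radical of Q. Then the map Q/r → Q̄ = C̄⁻¹R̄, c⁻¹r' + r ↦ c̄⁻¹r̄', is a well-defined ring isomorphism with inverse c̄⁻¹r̄' ↦ c⁻¹r' + r; in particular the left quotient ring Q̄ of R̄ exists and is semisimple. -/
open Function

universe u v

/-!
Let `J` be the Jacobson radical of `Q`. Composing `φ` with `Q → Q/J` gives a map `R → Q/J` for
which every element of `Q/J` is still a left fraction of images. Its kernel is the prime radical
`n` of `R`: it is contained in `n` because it is nilpotent, and it contains `n` because primes of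
the semisimple ring `Q/J` contract to primes of `R` and intersect to zero. So `R̄ = R/n` embeds into
`Q/J`, and a subring of an Artinian ring that fills it with left fractions has it as its left
quotient ring.
-/

section PrimeRadical

variable {R : Type*} [Ring R]

lemma le_or_le_of_mul_le_of_isPrimeNC {P I J : Ideal R} (hP : P.IsPrimeNC) (h : I * J ≤ P) :
    I ≤ P ∨ J ≤ P := by
  refine or_iff_not_imp_left.2 fun hI b hb => ?_
  obtain ⟨a, ha, haP⟩ := SetLike.not_le_iff_exists.1 hI
  refine (hP.2.2 a b fun r => ?_).resolve_left haP
  rw [mul_assoc]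
  exact h (Ideal.mul_mem_mul ha (J.mul_mem_left r hb))

lemma le_of_pow_le_of_isPrimeNC {P I : Ideal R} (hP : P.IsPrimeNC) {k : ℕ} (h : I ^ k ≤ P) :
    I ≤ P := by
  induction k with
  | zero =>
    rw [Submodule.pow_zero, Ideal.one_eq_top] at h
    exact absurd (top_le_iff.1 h) hP.1
  | succ k ih =>
    rw [Submodule.pow_succ] at h
    exact (le_or_le_of_mul_le_of_isPrimeNC hP h).elim ih id

lemma le_primeRadical_of_isNilpotent {I : Ideal R} (hI : IsNilpotent I) : I ≤ primeRadical R := by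
  obtain ⟨k, hk⟩ := hI
  exact le_sInf fun P hP => le_of_pow_le_of_isPrimeNC hP (k := k) (hk ▸ bot_le)

variable (R) in
lemma isPrimeNC_annihilator_of_isSimpleModule (M : Type*) [AddCommGroup M] [Module R M]
    [IsSimpleModule R M] : (Module.annihilator R M).IsPrimeNC := by
  have : Nontrivial M := IsSimpleModule.nontrivial R M
  refine ⟨fun h => ?_, fun a ha r => Ideal.mul_mem_right r _ ha, fun a b hab => ?_⟩
  · obtain ⟨m, hm⟩ := exists_ne (0 : M)
    have h1 : (1 : R) ∈ Module.annihilator R M := h ▸ Submodule.mem_top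
    exact hm (by simpa using Module.mem_annihilator.1 h1 m)
  · simp only [Module.mem_annihilator] at hab ⊢
    refine or_iff_not_imp_right.2 fun hb x => ?_
    obtain ⟨m, hm⟩ := not_forall.1 hb
    obtain ⟨r, rfl⟩ := IsSimpleModule.toSpanSingleton_surjective R hm x
    simpa only [LinearMap.toSpanSingleton_apply, mul_smul] using hab r m

variable (R) in
lemma primeRadical_le_jacobson : primeRadical R ≤ Ring.jacobson R := by
  rw [Ring.jacobson_eq_sInf_isMaximal]
  refine le_sInf fun m (hm : m.IsMaximal) x hx => ?_
  have : IsSimpleModule R (R ⧸ m) := isSimpleModule_iff_isCoatom.2 hm.out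
  have hx : x ∈ Module.annihilator R (R ⧸ m) :=
    Submodule.mem_sInf.1 hx _ (isPrimeNC_annihilator_of_isSimpleModule R (R ⧸ m))
  rw [← Submodule.Quotient.mk_eq_zero m]
  simpa only [← Submodule.Quotient.mk_smul, smul_eq_mul, mul_one] using
    Module.mem_annihilator.1 hx (Submodule.Quotient.mk 1)

variable (R) in
lemma primeRadical_eq_jacobson [IsSemiprimaryRing R] : primeRadical R = Ring.jacobson R :=
  (primeRadical_le_jacobson R).antisymm
    (le_primeRadical_of_isNilpotent IsSemiprimaryRing.isNilpotent)

variable (R) in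
lemma primeRadical_eq_bot_of_isSemisimpleRing [IsSemisimpleRing R] : primeRadical R = ⊥ :=
  le_bot_iff.1 ((primeRadical_le_jacobson R).trans (IsSemisimpleRing.jacobson_eq_bot R).le)

end PrimeRadical

lemma pow_comap_le_comap_pow {R S : Type*} [Semiring R] [Semiring S] (f : R →+* S) (I : Ideal S)
    (k : ℕ) : I.comap f ^ k ≤ (I ^ k).comap f := by
  induction k with
  | zero => simp only [Submodule.pow_zero, Ideal.one_eq_top, Ideal.comap_top, le_refl]
  | succ k ih =>
    rw [Submodule.pow_succ, Submodule.pow_succ]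
    refine Ideal.mul_le.2 fun a ha b hb => ?_
    rw [Ideal.mem_comap, map_mul]
    exact Ideal.mul_mem_mul (ih ha) hb

lemma isNilpotent_comap_of_injective {R S : Type*} [Ring R] [Ring S] {f : R →+* S}
    (hf : Injective f) {I : Ideal S} (hI : IsNilpotent I) : IsNilpotent (I.comap f) := by
  obtain ⟨k, hk⟩ := hI
  refine ⟨k, le_bot_iff.1 ((pow_comap_le_comap_pow f I k).trans ?_)⟩
  rw [hk]
  exact ((RingHom.injective_iff_ker_eq_bot f).1 hf).le

lemma mul_units_inv_mem_of_isArtinianRing {S : Type*} [Ring S] [IsArtinianRing S] {K : Ideal S}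
    {u : Sˣ} (hK : ∀ x ∈ K, x * u ∈ K) {x : S} (hx : x ∈ K) : x * ↑u⁻¹ ∈ K := by
  let mulRight : K →ₗ[S] K := (LinearMap.toSpanSingleton S S (u : S)).restrict hK
  have hinj : Injective mulRight := fun y z hyz =>
    Subtype.ext (u.isUnit.mul_right_cancel (congrArg Subtype.val hyz))
  obtain ⟨y, hy⟩ := IsArtinian.surjective_of_injective_endomorphism mulRight hinj ⟨x, hx⟩
  have hyx : (y : S) * u = x := congrArg Subtype.val hy
  rw [← hyx, Units.mul_inv_cancel_right]
  exact y.2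

/-- Every element of `S` is a left fraction `(f c)⁻¹ * f r` with `f c` invertible. In contrast to
`IsLeftQuotRing`, `f` may have a kernel, so that the property passes to quotients of `S`. -/
def HasLeftFractions {R S : Type*} [Ring R] [Ring S] (f : R →+* S) : Prop :=
  ∀ q : S, ∃ c r : R, IsUnit (f c) ∧ f c * q = f r

namespace HasLeftFractions

variable {R S T : Type*} [Ring R] [Ring S] [Ring T] {f : R →+* S}

lemma surjective_comp (hf : HasLeftFractions f) {g : S →+* T} (hg : Surjective g) :
    HasLeftFractions (g.comp f) := by
  intro q
  obtain ⟨s, rfl⟩ := hg q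
  obtain ⟨c, r, hc, hcr⟩ := hf s
  exact ⟨c, r, hc.map g, by simp only [RingHom.comp_apply, ← map_mul, hcr]⟩

lemma of_comp {g : S →+* T} (hgf : HasLeftFractions (g.comp f)) : HasLeftFractions g := by
  intro q
  obtain ⟨c, r, hc, hcr⟩ := hgf q
  exact ⟨f c, f r, hc, hcr⟩

lemma mul_mul_mem [IsArtinianRing S] (hf : HasLeftFractions f) {P : Ideal S} {x y : S}
    (h : ∀ r : R, x * f r * y ∈ P) (q : S) : x * q * y ∈ P := by
  -- `K` is stable under right multiplication by the image of `f`, hence by inverses of its units.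
  let K : Ideal S := ⨅ r : R, Submodule.comap (LinearMap.toSpanSingleton S S (f r * y)) P
  have mem_K {z : S} : z ∈ K ↔ ∀ r : R, z * f r * y ∈ P := by
    simp only [K, Submodule.mem_iInf, Submodule.mem_comap, LinearMap.toSpanSingleton_apply,
      smul_eq_mul, mul_assoc]
  obtain ⟨c, r, ⟨u, hu⟩, hcr⟩ := hf q
  have hK : ∀ z ∈ K, z * u ∈ K := fun z hz => mem_K.2 fun s => by
    simpa only [hu, map_mul, mul_assoc] using mem_K.1 hz (c * s)
  have hq : q = ↑u⁻¹ * f r := by rw [← hcr, ← hu, Units.inv_mul_cancel_left]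
  rw [hq, ← mul_assoc]
  exact mem_K.1 (mul_units_inv_mem_of_isArtinianRing hK (mem_K.2 h)) r

lemma isPrimeNC_comap [IsArtinianRing S] (hf : HasLeftFractions f) {P : Ideal S}
    (hP : P.IsPrimeNC) : (P.comap f).IsPrimeNC := by
  refine ⟨Ideal.comap_ne_top f hP.1, fun a ha r => ?_, fun a b hab => ?_⟩
  · rw [Ideal.mem_comap, map_mul]
    exact hP.2.1 _ ha _
  · refine hP.2.2 (f a) (f b) (hf.mul_mul_mem fun r => ?_)
    simpa only [Ideal.mem_comap, map_mul] using hab r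

lemma primeRadical_le_comap [IsArtinianRing S] (hf : HasLeftFractions f) :
    primeRadical R ≤ (primeRadical S).comap f := by
  intro x hx
  exact Submodule.mem_sInf.2 fun P hP => Submodule.mem_sInf.1 hx _ (hf.isPrimeNC_comap hP)

lemma isLeftQuotRing [IsArtinianRing S] (hf : HasLeftFractions f) (hinj : Injective f) :
    IsLeftQuotRing f where
  inj := hinj
  isUnit c hc := by
    refine IsArtinianRing.isUnit_iff_isRightRegular.2
      (isRightRegular_iff_left_eq_zero_of_mul.2 fun x hx => ?_)
    obtain ⟨s, r, hs, hsr⟩ := hf x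
    have hr : r = 0 := hc.2 r (hinj (by rw [map_mul, ← hsr, mul_assoc, hx, mul_zero, map_zero]))
    rw [hr, map_zero] at hsr
    exact hs.mul_right_eq_zero.1 hsr
  denom q := by
    obtain ⟨c, r, hc, hcr⟩ := hf q
    have eq_zero {x : R} (hx : f x = 0) : x = 0 := hinj (hx.trans (map_zero f).symm)
    refine ⟨c, r, ⟨fun x hx => eq_zero ?_, fun x hx => eq_zero ?_⟩, hcr⟩
    · exact hc.mul_right_eq_zero.1 (by rw [← map_mul, hx, map_zero])
    · exact hc.mul_left_eq_zero.1 (by rw [← map_mul, hx, map_zero])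

lemma exists_isLeftQuotRing_comp_eq [IsArtinianRing S] (hf : HasLeftFractions f) {π : R →+* T}
    (hπ : Surjective π) (hker : RingHom.ker π = RingHom.ker f) :
    ∃ ψ : T →+* S, IsLeftQuotRing ψ ∧ ψ.comp π = f := by
  let ψ : T →+* S := π.liftOfSurjective hπ ⟨f, hker.le⟩
  have hψ : ψ.comp π = f := π.liftOfSurjective_comp hπ ⟨f, hker.le⟩
  have hinj : Injective ψ := by
    refine (injective_iff_map_eq_zero ψ).2 fun y hy => ?_
    obtain ⟨x, rfl⟩ := hπ y
    have hx : x ∈ RingHom.ker f := by rwa [← hψ]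
    rwa [← hker] at hx
  exact ⟨ψ, isLeftQuotRing (of_comp (hψ ▸ hf)) hinj, hψ⟩

end HasLeftFractions

namespace IsLeftQuotRing

variable {R : Type u} {Q : Type v} [Ring R] [Ring Q] {φ : R →+* Q}

lemma hasLeftFractions (hφ : IsLeftQuotRing φ) : HasLeftFractions φ := by
  intro q
  obtain ⟨c, r, hc, hcr⟩ := hφ.denom q
  exact ⟨c, r, hφ.isUnit c hc, hcr⟩

lemma ker_mk_jacobson_comp [IsSemiprimaryRing Q] (hφ : IsLeftQuotRing φ) :
    RingHom.ker ((Ideal.Quotient.mk (Ring.jacobson Q)).comp φ) = primeRadical R := by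
  have hfrac := hφ.hasLeftFractions.surjective_comp
    (Ideal.Quotient.mk_surjective (I := Ring.jacobson Q))
  refine le_antisymm ?_ ?_
  · rw [← RingHom.comap_ker, Ideal.mk_ker]
    exact le_primeRadical_of_isNilpotent
      (isNilpotent_comap_of_injective hφ.inj IsSemiprimaryRing.isNilpotent)
  · have hle := hfrac.primeRadical_le_comap
    rwa [primeRadical_eq_bot_of_isSemisimpleRing (Q ⧸ Ring.jacobson Q)] at hle

lemma ringEquiv_comp {Q' : Type*} [Ring Q'] (hφ : IsLeftQuotRing φ) (e : Q ≃+* Q') :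
    IsLeftQuotRing (e.toRingHom.comp φ) where
  inj := e.injective.comp hφ.inj
  isUnit c hc := (hφ.isUnit c hc).map e.toRingHom
  denom q := by
    obtain ⟨c, r, hc, hcr⟩ := hφ.denom (e.symm q)
    exact ⟨c, r, hc, by simp [← hcr]⟩

lemma small (hφ : IsLeftQuotRing φ) : Small.{u} Q := by
  refine small_of_surjective (f := fun p : R × R => Ring.inverse (φ p.1) * φ p.2) fun q => ?_
  obtain ⟨c, r, hc, hcr⟩ := hφ.denom q
  exact ⟨(c, r), by simp only [← hcr, Ring.inverse_mul_cancel_left _ _ (hφ.isUnit c hc)]⟩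

lemma exists_leftQuotData_ringEquiv (hφ : IsLeftQuotRing φ) :
    ∃ (d : LeftQuotData R) (e : Q ≃+* d.Q), d.φ = e.toRingHom.comp φ :=
  have := hφ.small
  let e : Q ≃+* Shrink.{u} Q := (Shrink.ringEquiv Q).symm
  ⟨⟨Shrink.{u} Q, e.toRingHom.comp φ, hφ.ringEquiv_comp e⟩, e, rfl⟩

end IsLeftQuotRing

theorem quotient_by_radical_is_quotient_ring_of_factor_general
    {R : Type u} [Ring R] {Q : Type v} [Ring Q] [IsSemiprimaryRing Q] (φ : R →+* Q)
    (hquot : IsLeftQuotRing φ) {Rbar : Type w} [Ring Rbar] (π : R →+* Rbar)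
    (hπsurj : Function.Surjective π) (hπker : RingHom.ker π = primeRadical R) :
    ∃ e : LeftQuotData Rbar, IsSemisimpleRing e.Q ∧
      ∃ θ : Q →+* e.Q, Function.Surjective θ ∧
        RingHom.ker θ = primeRadical Q ∧ θ.comp φ = e.φ.comp π := by
  let q : Q →+* Q ⧸ Ring.jacobson Q := Ideal.Quotient.mk (Ring.jacobson Q)
  have hq : Surjective q := Ideal.Quotient.mk_surjective
  have hker : RingHom.ker π = RingHom.ker (q.comp φ) :=
    hπker.trans hquot.ker_mk_jacobson_comp.symm
  obtain ⟨ψ, hψquot, hψ⟩ :=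
    (hquot.hasLeftFractions.surjective_comp hq).exists_isLeftQuotRing_comp_eq hπsurj hker
  obtain ⟨d, e, hd⟩ := hψquot.exists_leftQuotData_ringEquiv
  refine ⟨d, e.isSemisimpleRing, e.toRingHom.comp q, e.surjective.comp hq, ?_, ?_⟩
  · rw [primeRadical_eq_jacobson, RingHom.ker_equiv_comp, Ideal.mk_ker]
  · rw [hd, RingHom.comp_assoc, RingHom.comp_assoc, hψ]

/-- **Proposition (`b13Sep12`.(6)).** Let `R` be a ring with a left Artinian left quotient
ring `Q = C⁻¹R` (realized by `φ : R → Q`), `n` its prime radical, `R̄ = R/n` (realized by a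
surjective `π` with kernel `n`), and let `r = primeRadical Q` be the (Jacobson = prime)
radical of `Q`.  Then the left quotient ring `Q̄ = C̄⁻¹R̄` of `R̄` exists and is semisimple,
and the map `Q/r → Q̄`, `c⁻¹r' + r ↦ c̄⁻¹r̄'`, is a well-defined ring isomorphism (encoded
by a surjective ring homomorphism `θ : Q → Q̄` with kernel `r` such that `θ ∘ φ = ψ ∘ π`,
where `ψ : R̄ → Q̄` is the canonical embedding). -/
theorem quotient_by_radical_is_quotient_ring_of_factor
    {R : Type u} [Ring R] {Q : Type v} [Ring Q] (φ : R →+* Q)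
    (hquot : IsLeftQuotRing φ) (hart : IsArtinianRing Q)
    {Rbar : Type w} [Ring Rbar] (π : R →+* Rbar)
    (hπsurj : Function.Surjective π) (hπker : RingHom.ker π = primeRadical R) :
    ∃ e : LeftQuotData Rbar, IsSemisimpleRing e.Q ∧
      ∃ θ : Q →+* e.Q, Function.Surjective θ ∧
        RingHom.ker θ = primeRadical Q ∧ θ.comp φ = e.φ.comp π :=
  quotient_by_radical_is_quotient_ring_of_factor_general φ hquot π hπsurj hπker
end
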